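/- Let λ > 0, let k ≥ 1, and let ν = Σ_{i=1}^{k} a_i δ_{b_i} be a Borel probability measure on ℝ supported on k distinct nonzero points b_1, …, b_k, with a_i > 0 and Σ a_i = 1. Let π = e^{−λ} Σ_{m=0}^∞ (λ^m/m!) ν^{∗m} be the classical compound Poisson distribution with rate λ and jump distribution ν, where ν^{∗m} denotes the m-fold classical convolution power of ν (ν^{∗0} = δ_0). Let (μ_n)_{n≥1} be Borel probability measures on ℝ, each infinitely divisible with respect to classical convolution, with finite moments of order up to 2k+2, and suppose ∫ x^i dμ_n → ∫ x^i dπ as n → ∞ for every i = 1, …, 2k+2. Then μ_n converges weakly to π. -/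

import Mathlib

open MeasureTheory Filter Topology BoundedContinuousFunction

/-- Classical convolution of two Borel measures on ℝ: the pushforward of the
product measure under addition. -/
noncomputable def classicalConv (μ ν : Measure ℝ) : Measure ℝ :=
  (μ.prod ν).map (fun p => p.1 + p.2)

/-- The m-fold classical convolution power of a measure (0th power is δ₀). -/
noncomputable def convPow (ν : Measure ℝ) : ℕ → Measure ℝ
  | 0 => Measure.dirac 0
  | n + 1 => classicalConv (convPow ν n) ν

/-- A probability measure is classically infinitely divisible if for every m ≥ 1 it
is the m-fold classical convolution power of some probability measure. -/
def IsClassicallyInfDiv (μ : Measure ℝ) : Prop :=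
  ∀ m : ℕ, 1 ≤ m → ∃ ν : Measure ℝ, IsProbabilityMeasure ν ∧ μ = convPow ν m

/-- Weak convergence of a sequence of measures: convergence of integrals of all
bounded continuous functions. -/
def WeakConv (μs : ℕ → Measure ℝ) (μ : Measure ℝ) : Prop :=
  ∀ f : ℝ →ᵇ ℝ, Tendsto (fun n => ∫ x, f x ∂(μs n)) atTop (𝓝 (∫ x, f x ∂μ))

/-- The classical compound Poisson distribution with rate λ and jump distribution ν:
e^{-λ} ∑_{m=0}^∞ (λ^m/m!) ν^{∗m}. -/
noncomputable def compoundPoisson (lam : ℝ) (ν : Measure ℝ) : Measure ℝ :=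
  Measure.sum (fun m : ℕ =>
    ENNReal.ofReal (Real.exp (-lam) * lam ^ m / (Nat.factorial m)) • convPow ν m)

theorem classicalConv_eq (μ ν : Measure ℝ) : classicalConv μ ν = Measure.conv μ ν := rfl

theorem convPow_prob (ν : Measure ℝ) [IsProbabilityMeasure ν] (m : ℕ) :
    IsProbabilityMeasure (convPow ν m) := by
  induction m with
  | zero => unfold convPow; infer_instance
  | succ m ih =>
    unfold convPow
    rw [classicalConv_eq]
    infer_instance

theorem charFun_convPow (ν : Measure ℝ) [IsProbabilityMeasure ν] (m : ℕ) (t : ℝ) :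
    charFun (convPow ν m) t = (charFun ν t) ^ m := by
  induction m with
  | zero => simp [convPow, charFun_dirac]
  | succ m ih =>
    have := convPow_prob ν m
    rw [convPow, classicalConv_eq, charFun_conv, ih, pow_succ]

/-- integrability passes to the summand -/
theorem integrable_of_classicalConv (μ ν : Measure ℝ) [IsProbabilityMeasure μ]
    [IsProbabilityMeasure ν] (i : ℕ)
    (h : Integrable (fun x => x ^ i) (classicalConv μ ν)) :
    Integrable (fun x => x ^ i) ν := by
  unfold classicalConv at h
  rw [integrable_map_measure (by fun_prop) (by fun_prop)] at h
  have h2 := h.prod_right_ae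
  obtain ⟨x, hx⟩ := h2.exists
  have hx' : MemLp (fun y : ℝ => x + y) i ν := by
    rcases Nat.eq_zero_or_pos i with rfl | hi
    · simp only [Nat.cast_zero, memLp_zero_iff_aestronglyMeasurable]; fun_prop
    rw [← integrable_norm_rpow_iff (by fun_prop) (by exact_mod_cast hi.ne') (by simp)]
    have := hx.norm
    simpa [Function.comp_def] using this
  have h3 : MemLp (fun y : ℝ => y) i ν := by
    have := hx'.sub (memLp_const x)
    simpa [Pi.sub_def] using this
  have := h3.integrable_norm_pow'
  rw [← integrable_norm_iff (by fun_prop)]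
  simpa using this

noncomputable def momSeries (ρ : Measure ℝ) : PowerSeries ℝ :=
  PowerSeries.mk (fun i => (∫ x, x ^ i ∂ρ) / (Nat.factorial i))

theorem conv_moment (μ ν : Measure ℝ) [IsProbabilityMeasure μ]
    [IsProbabilityMeasure ν] (N : ℕ)
    (hμ : ∀ i ≤ N, Integrable (fun x => x ^ i) μ)
    (hν : ∀ i ≤ N, Integrable (fun x => x ^ i) ν) (i : ℕ) (hi : i ≤ N) :
    Integrable (fun x => x ^ i) (classicalConv μ ν) ∧
    ∫ x, x ^ i ∂(classicalConv μ ν) =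
      ∑ p ∈ Finset.HasAntidiagonal.antidiagonal i, (i.choose p.1 : ℝ) * ((∫ x, x ^ p.1 ∂μ) * ∫ x, x ^ p.2 ∂ν) := by
  have key : (fun p : ℝ × ℝ => (p.1 + p.2) ^ i) = fun q => ∑ p ∈ Finset.HasAntidiagonal.antidiagonal i,
      (i.choose p.1 : ℝ) * (q.1 ^ p.1 * q.2 ^ p.2) := by
    ext q
    rw [(Commute.all q.1 q.2).add_pow']
    simp [nsmul_eq_mul]
  have hint : ∀ p ∈ Finset.HasAntidiagonal.antidiagonal i, Integrable
      (fun q : ℝ × ℝ => (i.choose p.1 : ℝ) * (q.1 ^ p.1 * q.2 ^ p.2)) (μ.prod ν) := by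
    intro p hp
    have := Finset.HasAntidiagonal.mem_antidiagonal.1 hp
    exact ((hμ p.1 (by omega)).mul_prod (hν p.2 (by omega))).const_mul _
  constructor
  · unfold classicalConv
    rw [integrable_map_measure (by fun_prop) (by fun_prop)]
    have : (fun x : ℝ => x ^ i) ∘ (fun p : ℝ × ℝ => p.1 + p.2) = fun p => (p.1 + p.2) ^ i := rfl
    rw [this, key]
    exact integrable_finsetSum _ hint
  · unfold classicalConv
    rw [integral_map (by fun_prop) (by fun_prop)]
    rw [key, integral_finsetSum _ hint]
    refine Finset.sum_congr rfl fun p hp => ?_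
    rw [integral_const_mul, integral_prod_mul (fun x : ℝ => x ^ p.1) (fun x : ℝ => x ^ p.2)]

theorem convPow_moment (ρ : Measure ℝ) [IsProbabilityMeasure ρ] (N : ℕ)
    (hρ : ∀ i ≤ N, Integrable (fun x => x ^ i) ρ) (m : ℕ) : ∀ i ≤ N,
    Integrable (fun x => x ^ i) (convPow ρ m) ∧
    (∫ x, x ^ i ∂(convPow ρ m)) / (Nat.factorial i) = PowerSeries.coeff i ((momSeries ρ) ^ m) := by
  induction m with
  | zero =>
    intro i hi
    refine ⟨by simp [convPow, integrable_dirac], ?_⟩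
    simp [convPow, PowerSeries.coeff_one]
    split_ifs with h <;> simp [h]
  | succ m ih =>
    intro i hi
    have := convPow_prob ρ m
    obtain ⟨h1, h2⟩ := conv_moment (convPow ρ m) ρ N (fun j hj => (ih j hj).1) hρ i hi
    refine ⟨h1, ?_⟩
    rw [convPow, h2, pow_succ, PowerSeries.coeff_mul, Finset.sum_div]
    refine Finset.sum_congr rfl fun p hp => ?_
    have hp := Finset.HasAntidiagonal.mem_antidiagonal.1 hp
    rw [← (ih p.1 (by omega)).2, momSeries, PowerSeries.coeff_mk, ← hp,
      ← Nat.add_choose_mul_factorial_mul_factorial p.1 p.2]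
    have h3 : ((p.1 + p.2).choose p.1 : ℝ) ≠ 0 := by
      exact_mod_cast (Nat.choose_pos (by omega)).ne'
    have := Nat.factorial_ne_zero p.1
    have := Nat.factorial_ne_zero p.2
    rw [Nat.choose_symm_add] at h3 ⊢
    push_cast
    field_simp

/-- limit of cumulants -/
theorem cumulant_limit (N : ℕ) (F : ℕ → PowerSeries ℝ) (hF0 : ∀ n, PowerSeries.coeff 0 (F n) = 1)
    (Q W : ℕ → ℝ) (hQ0 : Q 0 = 1)
    (hQ : ∀ i ≤ N, Tendsto (fun n => PowerSeries.coeff i (F n ^ n)) atTop (𝓝 (Q i)))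
    (hW : ∀ i : ℕ, (i + 1 : ℝ) * Q (i + 1) =
      ∑ p ∈ Finset.HasAntidiagonal.antidiagonal i, (p.1 + 1 : ℝ) * W (p.1 + 1) * Q p.2) :
    ∀ i, 1 ≤ i → i ≤ N → Tendsto (fun n : ℕ => (n : ℝ) * PowerSeries.coeff i (F n)) atTop (𝓝 (W i)) := by
  have hrec : ∀ n i : ℕ, ∑ p ∈ Finset.HasAntidiagonal.antidiagonal i,
      (PowerSeries.coeff (p.1 + 1) (F n ^ n) * (p.1 + 1)) * PowerSeries.coeff p.2 (F n) =
      n * ∑ p ∈ Finset.HasAntidiagonal.antidiagonal i,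
      (PowerSeries.coeff (p.1 + 1) (F n) * (p.1 + 1)) * PowerSeries.coeff p.2 (F n ^ n) := by
    intro n i
    have h : (PowerSeries.derivative ℝ (F n ^ n)) * F n =
        n • ((PowerSeries.derivative ℝ (F n)) * F n ^ n) := by
      rw [PowerSeries.derivative_pow]
      rcases n with _ | n
      · simp
      · simp only [Nat.add_sub_cancel, pow_succ, nsmul_eq_mul]; ring
    have h2 := congrArg (PowerSeries.coeff i) h
    rw [map_nsmul, PowerSeries.coeff_mul, PowerSeries.coeff_mul, nsmul_eq_mul] at h2
    simpa only [PowerSeries.coeff_derivative] using h2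
  intro i
  induction i using Nat.strong_induction_on with
  | _ i ih =>
  intro h1 hN
  obtain ⟨i, rfl⟩ : ∃ j, i = j + 1 := ⟨i - 1, by omega⟩
  have hsplit : ∀ f : ℕ × ℕ → ℝ, ∑ p ∈ Finset.HasAntidiagonal.antidiagonal i, f p =
      f (i, 0) + ∑ p ∈ (Finset.HasAntidiagonal.antidiagonal i).erase (i, 0), f p := fun f =>
    (Finset.add_sum_erase _ _ (by simp)).symm
  have hmem : ∀ p ∈ (Finset.HasAntidiagonal.antidiagonal i).erase (i, 0), p.1 + p.2 = i ∧ 1 ≤ p.2 := by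
    intro p hp
    obtain ⟨hp1, hp2⟩ := Finset.mem_erase.1 hp
    have hp2 := Finset.HasAntidiagonal.mem_antidiagonal.1 hp2
    refine ⟨hp2, ?_⟩
    by_contra hcon
    exact hp1 (Prod.ext (by simp; omega) (by simp; omega))
  have hW' := hW i
  rw [hsplit] at hW'
  have hsmall : Tendsto (fun n : ℕ => ∑ p ∈ (Finset.HasAntidiagonal.antidiagonal i).erase (i, 0),
      (PowerSeries.coeff (p.1 + 1) (F n ^ n) * (p.1 + 1)) * PowerSeries.coeff p.2 (F n)) atTop (𝓝 0) := by
    rw [show (0:ℝ) = ∑ p ∈ (Finset.HasAntidiagonal.antidiagonal i).erase (i, 0), (Q (p.1 + 1) * (p.1 + 1)) * 0 by simp]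
    refine tendsto_finsetSum _ fun p hp => ?_
    obtain ⟨hp1, hp2⟩ := hmem p hp
    refine Tendsto.mul ((hQ _ (by omega)).mul_const _) ?_
    have h3 := (ih p.2 (by omega) hp2 (by omega)).mul (tendsto_inv_atTop_nhds_zero_nat (𝕜 := ℝ))
    rw [mul_zero] at h3
    refine h3.congr' ?_
    filter_upwards [eventually_ne_atTop 0] with n hn
    field_simp
  have hbig : Tendsto (fun n : ℕ => ∑ p ∈ (Finset.HasAntidiagonal.antidiagonal i).erase (i, 0),
      (p.1 + 1 : ℝ) * (n * PowerSeries.coeff (p.1 + 1) (F n)) * PowerSeries.coeff p.2 (F n ^ n))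
      atTop (𝓝 (∑ p ∈ (Finset.HasAntidiagonal.antidiagonal i).erase (i, 0), (p.1 + 1 : ℝ) * W (p.1 + 1) * Q p.2)) := by
    refine tendsto_finsetSum _ fun p hp => ?_
    obtain ⟨hp1, hp2⟩ := hmem p hp
    exact ((ih (p.1 + 1) (by omega) (by omega) (by omega)).const_mul _).mul (hQ _ (by omega))
  have hall := (((hQ (i + 1) hN).const_mul (i + 1 : ℝ)).add hsmall).sub hbig |>.div_const (i + 1 : ℝ)
  have hi : (i + 1 : ℝ) ≠ 0 := by positivity
  have hlim : ((i + 1 : ℝ) * Q (i + 1) + 0 - ∑ p ∈ (Finset.HasAntidiagonal.antidiagonal i).erase (i, 0),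
      (p.1 + 1 : ℝ) * W (p.1 + 1) * Q p.2) / (i + 1 : ℝ) = W (i + 1) := by
    rw [hW', hQ0]; field_simp; ring
  rw [hlim] at hall
  refine hall.congr fun n => ?_
  have h4 := hrec n i
  rw [hsplit, hsplit, mul_add (n : ℝ), Finset.mul_sum] at h4
  have h5 : PowerSeries.coeff 0 (F n ^ n) = 1 := by
    have := hF0 n
    rw [PowerSeries.coeff_zero_eq_constantCoeff_apply] at this ⊢
    rw [map_pow, this, one_pow]
  simp only [hF0, h5] at h4
  have h6 : ∑ p ∈ (Finset.HasAntidiagonal.antidiagonal i).erase (i, 0),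
      (p.1 + 1 : ℝ) * (n * PowerSeries.coeff (p.1 + 1) (F n)) * PowerSeries.coeff p.2 (F n ^ n) =
      ∑ p ∈ (Finset.HasAntidiagonal.antidiagonal i).erase (i, 0), (n : ℝ) *
      (PowerSeries.coeff (p.1 + 1) (F n) * (p.1 + 1) * PowerSeries.coeff p.2 (F n ^ n)) :=
    Finset.sum_congr rfl fun p _ => by ring
  rw [h6, div_eq_iff hi]
  linarith

theorem bdd_dslope (f : ℂ → ℂ) (hf : Differentiable ℂ f) (C : ℝ) (hC : ∀ x : ℝ, ‖f x‖ ≤ C) (c : ℝ) :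
    Differentiable ℂ (dslope f c) ∧ ∃ D : ℝ, ∀ x : ℝ, ‖dslope f c x‖ ≤ D := by
  have hd : Differentiable ℂ (dslope f c) := by
    rw [← differentiableOn_univ]
    exact (Complex.differentiableOn_dslope univ_mem).2 hf.differentiableOn
  refine ⟨hd, ?_⟩
  have hcont : Continuous (fun x : ℝ => dslope f c x) := hd.continuous.comp Complex.continuous_ofReal
  obtain ⟨D, hD⟩ := (isCompact_Icc (a := c - 1) (b := c + 1)).exists_bound_of_continuousOn
    hcont.continuousOn
  refine ⟨max D (2 * C), fun x => ?_⟩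
  by_cases hx : x ∈ Set.Icc (c - 1) (c + 1)
  · exact (hD x hx).trans (le_max_left _ _)
  · refine le_trans ?_ (le_max_right _ _)
    have hxc : 1 ≤ |x - c| := by
      by_contra hcon
      have := abs_lt.1 (not_le.1 hcon)
      exact hx ⟨by linarith, by linarith⟩
    have hne : (x : ℂ) ≠ c := by
      intro h
      have : x = c := by exact_mod_cast h
      simp [this] at hxc
      linarith
    rw [dslope_of_ne _ hne, slope_def_field, norm_div, ← Complex.ofReal_sub, Complex.norm_real,
      Real.norm_eq_abs]
    have h1 : ‖f x - f c‖ ≤ 2 * C := (norm_sub_le _ _).trans (by linarith [hC x, hC c])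
    exact (div_le_self (norm_nonneg _) hxc).trans h1

theorem newton_interp (l : List ℝ) : ∀ (f : ℂ → ℂ), Differentiable ℂ f →
    (∃ C : ℝ, ∀ x : ℝ, ‖f x‖ ≤ C) →
    ∃ (Q : Polynomial ℂ) (g : ℝ → ℂ) (D : ℝ), Q.natDegree ≤ l.length ∧ (∀ x, ‖g x‖ ≤ D) ∧
      ∀ x : ℝ, f x = Q.eval (x : ℂ) + ((l.map (fun c => x - c)).prod : ℝ) * g x := by
  induction l with
  | nil =>
    rintro f hf ⟨C, hC⟩
    exact ⟨0, fun x => f x, C, by simp, hC, by simp⟩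
  | cons c l ih =>
    rintro f hf ⟨C, hC⟩
    obtain ⟨h1, h2⟩ := bdd_dslope f hf C hC c
    obtain ⟨Q, g, D, hQ, hg, hf2⟩ := ih _ h1 h2
    refine ⟨Polynomial.C (f c) + (Polynomial.X - Polynomial.C (c : ℂ)) * Q, g, D, ?_, hg, ?_⟩
    · refine (Polynomial.natDegree_add_le _ _).trans ?_
      rw [Polynomial.natDegree_C]
      refine max_le (by simp) ?_
      refine Polynomial.natDegree_mul_le.trans ?_
      rw [Polynomial.natDegree_X_sub_C, List.length_cons]
      omega
    · intro x
      have h3 := sub_smul_dslope f (c : ℂ) (x : ℂ)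
      rw [hf2 x, smul_eq_mul] at h3
      simp only [Polynomial.eval_add, Polynomial.eval_C, Polynomial.eval_mul, Polynomial.eval_sub,
        Polynomial.eval_X, List.map_cons, List.prod_cons, Complex.ofReal_mul, Complex.ofReal_sub]
      linear_combination -h3

/-- Interpolation at double nodes. -/
theorem double_interp (k : ℕ) (b : Fin k → ℝ) (f : ℂ → ℂ) (hf : Differentiable ℂ f)
    (hC : ∃ C : ℝ, ∀ x : ℝ, ‖f x‖ ≤ C) :
    ∃ (Q : Polynomial ℂ) (D : ℝ), Q.natDegree ≤ 2 * k + 2 ∧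
      ∀ x : ℝ, ‖f x - Q.eval (x : ℂ)‖ ≤ D * (x * ∏ i, (x - b i)) ^ 2 := by
  obtain ⟨Q, g, D, hQ, hg, h⟩ := newton_interp ((0 :: List.ofFn b) ++ (0 :: List.ofFn b)) f hf hC
  refine ⟨Q, D, hQ.trans (by simp; omega), fun x => ?_⟩
  have hp : (((0 :: List.ofFn b) ++ (0 :: List.ofFn b)).map (fun c => x - c)).prod
      = (x * ∏ i, (x - b i)) ^ 2 := by
    rw [List.map_append, List.prod_append, List.map_cons, List.prod_cons, List.map_ofFn,
      List.prod_ofFn]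
    simp [sq]
  rw [h x, hp, add_sub_cancel_left, norm_mul, Complex.norm_real, Real.norm_eq_abs,
    abs_of_nonneg (sq_nonneg _), mul_comm]
  exact mul_le_mul_of_nonneg_right (hg x) (sq_nonneg _)

theorem hasSum_of_eq {E : Type*} [NormedAddCommGroup E] {f g : ℕ → E} {a b : E} (h : HasSum g b)
    (hfg : ∀ m, f m = g m) (hab : a = b) : HasSum f a := by
  rw [hab, funext hfg]; exact h

theorem weight_hasSum (lam : ℝ) :
    HasSum (fun m : ℕ => Real.exp (-lam) * lam ^ m / (Nat.factorial m)) 1 := by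
  have h := (NormedSpace.expSeries_div_hasSum_exp (𝔸 := ℝ) lam).mul_left (Real.exp (-lam))
  rw [← Real.exp_eq_exp_ℝ, ← Real.exp_add, neg_add_cancel, Real.exp_zero] at h
  simpa only [mul_div_assoc] using h

theorem compoundPoisson_prob (lam : ℝ) (hlam : 0 < lam) (ν : Measure ℝ) [IsProbabilityMeasure ν] :
    IsProbabilityMeasure (compoundPoisson lam ν) := by
  constructor
  unfold compoundPoisson
  rw [Measure.sum_apply _ MeasurableSet.univ]
  have : ∀ m, convPow ν m Set.univ = 1 := fun m => (convPow_prob ν m).measure_univ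
  simp only [Measure.smul_apply, this, smul_eq_mul, mul_one]
  have h := weight_hasSum lam
  rw [← ENNReal.ofReal_tsum_of_nonneg (fun m => by positivity) h.summable, h.tsum_eq,
    ENNReal.ofReal_one]

theorem compoundPoisson_hasSum {E : Type*} [NormedAddCommGroup E] [NormedSpace ℝ E]
    (lam : ℝ) (hlam : 0 < lam) (ν : Measure ℝ) (f : ℝ → E)
    (hf : Integrable f (compoundPoisson lam ν)) :
    HasSum (fun m : ℕ => (Real.exp (-lam) * lam ^ m / (Nat.factorial m)) • ∫ x, f x ∂(convPow ν m))
      (∫ x, f x ∂(compoundPoisson lam ν)) := by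
  have h := hasSum_integral_measure hf
  refine hasSum_of_eq h (fun m => ?_) rfl
  rw [integral_smul_measure, ENNReal.toReal_ofReal (by positivity)]

theorem compoundPoisson_charFun (lam : ℝ) (hlam : 0 < lam) (ν : Measure ℝ)
    [IsProbabilityMeasure ν] (t : ℝ) :
    charFun (compoundPoisson lam ν) t = Complex.exp (lam * (charFun ν t - 1)) := by
  have := compoundPoisson_prob lam hlam ν
  have hint : Integrable (fun x : ℝ => Complex.exp (t * x * Complex.I)) (compoundPoisson lam ν) := by
    refine Integrable.of_bound (by fun_prop) 1 (ae_of_all _ fun x => ?_)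
    rw [← Complex.ofReal_mul, Complex.norm_exp_ofReal_mul_I]
  have h := compoundPoisson_hasSum lam hlam ν _ hint
  rw [← charFun_apply_real] at h
  refine h.unique ?_
  have h2 := (NormedSpace.expSeries_div_hasSum_exp (𝔸 := ℂ) (lam * charFun ν t)).mul_left
    (Complex.exp (-lam))
  rw [← Complex.exp_eq_exp_ℂ, ← Complex.exp_add] at h2
  refine hasSum_of_eq h2 (fun m => ?_) ?_
  · rw [← charFun_apply_real, charFun_convPow, Complex.real_smul]
    push_cast
    ring
  · congr 1; ring

/-- moments of compound Poisson -/
theorem compoundPoisson_moment (lam : ℝ) (hlam : 0 < lam) (ν : Measure ℝ)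
    [IsProbabilityMeasure ν] (hν : ∀ i : ℕ, Integrable (fun x => x ^ i) ν) (i : ℕ) :
    (i + 1 : ℝ) * ((∫ x, x ^ (i + 1) ∂(compoundPoisson lam ν)) / (Nat.factorial (i + 1))) =
      ∑ p ∈ Finset.HasAntidiagonal.antidiagonal i, (p.1 + 1 : ℝ) *
        (lam * ((∫ x, x ^ (p.1 + 1) ∂ν) / (Nat.factorial (p.1 + 1)))) *
        ((∫ x, x ^ p.2 ∂(compoundPoisson lam ν)) / (Nat.factorial p.2)) := by
  have hmomc : ∀ m i : ℕ, Integrable (fun x => x ^ i) (convPow ν m) ∧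
    (∫ x, x ^ i ∂(convPow ν m)) / (Nat.factorial i) = PowerSeries.coeff i ((momSeries ν) ^ m) :=
    fun m i => convPow_moment ν i (fun j _ => hν j) m i le_rfl
  have hstep : ∀ (S : ℕ → ℝ) (i : ℕ), (∀ j ≤ i, HasSum (fun m : ℕ =>
      (Real.exp (-lam) * lam ^ m / (Nat.factorial m)) * PowerSeries.coeff j ((momSeries ν) ^ m)) (S j)) →
      HasSum (fun m : ℕ => (Real.exp (-lam) * lam ^ m / (Nat.factorial m)) *
        ((i + 1 : ℝ) * PowerSeries.coeff (i + 1) ((momSeries ν) ^ m)))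
        (∑ p ∈ Finset.HasAntidiagonal.antidiagonal i, (p.1 + 1 : ℝ) *
        (lam * ((∫ x, x ^ (p.1 + 1) ∂ν) / (Nat.factorial (p.1 + 1)))) * S p.2) := by
    intro S i hS
    rw [← hasSum_nat_add_iff' 1]
    have h0 : PowerSeries.coeff (i + 1) (1 : PowerSeries ℝ) = 0 := by simp [PowerSeries.coeff_one]
    simp only [Finset.sum_range_one, pow_zero, h0, mul_zero, sub_zero]
    have hs := hasSum_sum (s := Finset.HasAntidiagonal.antidiagonal i) (fun p hp =>
      (hS p.2 (by have := Finset.HasAntidiagonal.mem_antidiagonal.1 hp; omega)).mul_left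
        ((p.1 + 1 : ℝ) * (lam * ((∫ x, x ^ (p.1 + 1) ∂ν) / (Nat.factorial (p.1 + 1))))))
    refine hasSum_of_eq hs (fun m => ?_) rfl
    have hd := congrArg (PowerSeries.coeff i) (PowerSeries.derivative_pow (momSeries ν) (m + 1))
    rw [Nat.add_sub_cancel, mul_assoc, mul_comm (momSeries ν ^ m), ← nsmul_eq_mul, map_nsmul,
      PowerSeries.coeff_mul, nsmul_eq_mul, PowerSeries.coeff_derivative] at hd
    rw [mul_comm (i + 1 : ℝ), hd, ← mul_assoc, Finset.mul_sum]
    refine Finset.sum_congr rfl fun p hp => ?_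
    rw [PowerSeries.coeff_derivative]
    conv_lhs => rw [momSeries, PowerSeries.coeff_mk, ← momSeries]
    rw [Nat.factorial_succ m]
    push_cast
    field_simp
    ring
  have hsummable : ∀ i : ℕ, Summable (fun m : ℕ =>
      (Real.exp (-lam) * lam ^ m / (Nat.factorial m)) * PowerSeries.coeff i ((momSeries ν) ^ m)) := by
    intro i
    induction i using Nat.strong_induction_on with
    | _ i ih =>
    rcases i with _ | i
    · have h0 : ∀ m, PowerSeries.coeff 0 ((momSeries ν) ^ m) = 1 := by
        intro m
        have := convPow_prob ν m
        rw [← (hmomc m 0).2]; simp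
      simpa [h0] using (weight_hasSum lam).summable
    · have h := (hstep _ i (fun j hj => (ih j (by omega)).hasSum)).summable
      have hi : (i + 1 : ℝ) ≠ 0 := by positivity
      refine (h.mul_left (i + 1 : ℝ)⁻¹).congr fun m => ?_
      field_simp
  have heven : ∀ i : ℕ, Integrable (fun x => x ^ (2 * i)) (compoundPoisson lam ν) := by
    intro i
    refine integrable_sum_measure (fun m => (hmomc m _).1.smul_measure (by simp)) ?_
    refine ((hsummable (2 * i)).mul_left (Nat.factorial (2 * i) : ℝ)).congr fun m => ?_
    rw [integral_smul_measure, ENNReal.toReal_ofReal (by positivity), ← (hmomc m _).2]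
    have h : ∀ x : ℝ, ‖x ^ (2 * i)‖ = x ^ (2 * i) := fun x => by
      rw [Real.norm_eq_abs, abs_of_nonneg]; rw [pow_mul]; positivity
    simp only [h, smul_eq_mul]
    field_simp
  have hprob := compoundPoisson_prob lam hlam ν
  have hint : ∀ i : ℕ, Integrable (fun x => x ^ i) (compoundPoisson lam ν) := by
    intro i
    refine ((integrable_const (1 : ℝ)).add (heven i)).mono' (by fun_prop) (ae_of_all _ fun x => ?_)
    rw [Real.norm_eq_abs]
    simp only [Pi.add_apply]
    rw [mul_comm, pow_mul, ← sq_abs (x ^ i)]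
    nlinarith [sq_nonneg (|x ^ i| - 1)]
  have hS : ∀ j : ℕ, HasSum (fun m : ℕ =>
      (Real.exp (-lam) * lam ^ m / (Nat.factorial m)) * PowerSeries.coeff j ((momSeries ν) ^ m))
      ((∫ x, x ^ j ∂(compoundPoisson lam ν)) / (Nat.factorial j)) := by
    intro j
    have h := (compoundPoisson_hasSum lam hlam ν _ (hint j)).div_const (Nat.factorial j : ℝ)
    refine hasSum_of_eq h (fun m => ?_) rfl
    rw [← (hmomc m j).2, smul_eq_mul]
    ring
  have h1 := hstep _ i (fun j _ => hS j)
  refine HasSum.unique ?_ h1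
  refine hasSum_of_eq ((hS (i + 1)).mul_left (i + 1 : ℝ)) (fun m => ?_) rfl
  ring

theorem integrable_poly (N : ℕ) (ρ : Measure ℝ)
    (hρ : ∀ i ≤ N, Integrable (fun x => x ^ i) ρ) (P : Polynomial ℂ) (hP : P.natDegree ≤ N) :
    Integrable (fun x : ℝ => P.eval (x : ℂ)) ρ ∧
    ∫ x : ℝ, P.eval (x : ℂ) ∂ρ =
      ∑ i ∈ Finset.range (N + 1), P.coeff i * ((∫ x, x ^ i ∂ρ : ℝ) : ℂ) := by
  have h : (fun x : ℝ => P.eval (x : ℂ)) = fun x : ℝ => ∑ i ∈ Finset.range (N + 1),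
      P.coeff i * ((x ^ i : ℝ) : ℂ) := by
    ext x
    rw [Polynomial.eval_eq_sum_range' (Nat.lt_succ_of_le hP)]
    push_cast
    rfl
  have hint : ∀ i ∈ Finset.range (N + 1),
      Integrable (fun x : ℝ => P.coeff i * ((x ^ i : ℝ) : ℂ)) ρ := by
    intro i hi
    exact ((hρ i (by have := Finset.mem_range.1 hi; omega)).ofReal).const_mul _
  rw [h]
  refine ⟨integrable_finsetSum _ hint, ?_⟩
  rw [integral_finsetSum _ hint]
  refine Finset.sum_congr rfl fun i _ => ?_
  rw [integral_const_mul]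
  congr 1
  exact integral_ofReal

theorem poly_limit (N : ℕ) (ρ : ℕ → Measure ℝ) (ν : Measure ℝ) (lam : ℝ)
    (hρ : ∀ n, ∀ i ≤ N, Integrable (fun x => x ^ i) (ρ n))
    (hν : ∀ i, Integrable (fun x => x ^ i) ν)
    (hlim : ∀ i, 1 ≤ i → i ≤ N → Tendsto (fun n : ℕ => (n : ℝ) * ∫ x, x ^ i ∂(ρ n)) atTop
      (𝓝 (lam * ∫ x, x ^ i ∂ν)))
    (P : Polynomial ℂ) (hP : P.natDegree ≤ N) (hP0 : P.eval 0 = 0) :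
    Tendsto (fun n : ℕ => (n : ℂ) * ∫ x : ℝ, P.eval (x : ℂ) ∂(ρ n)) atTop
      (𝓝 (lam * ∫ x : ℝ, P.eval (x : ℂ) ∂ν)) := by
  rw [(integrable_poly N ν (fun i _ => hν i) P hP).2]
  simp_rw [fun n => (integrable_poly N (ρ n) (hρ n) P hP).2, Finset.mul_sum]
  refine tendsto_finsetSum _ fun i hi => ?_
  have hi := Finset.mem_range.1 hi
  rcases Nat.eq_zero_or_pos i with rfl | h
  · have : P.coeff 0 = 0 := by rw [Polynomial.coeff_zero_eq_eval_zero, hP0]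
    simp [this]
  · have h2 := ((Complex.continuous_ofReal.tendsto _).comp (hlim i h (by omega))).const_mul (P.coeff i)
    refine (h2.congr fun n => ?_).trans_eq ?_
    · simp only [Function.comp_apply]; push_cast; ring
    · congr 1; push_cast; ring

theorem integral_atomic {k : ℕ} (b a : Fin k → ℝ) (ha : ∀ i, 0 < a i) (g : ℝ → ℂ) :
    ∫ x, g x ∂(∑ i, ENNReal.ofReal (a i) • Measure.dirac (b i)) = ∑ i, (a i : ℂ) * g (b i) := by
  rw [integral_finsetSum_measure]
  · refine Finset.sum_congr rfl fun i _ => ?_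
    rw [integral_smul_measure, integral_dirac, ENNReal.toReal_ofReal (ha i).le, Complex.real_smul]
  · intro i _
    exact (integrable_dirac (by simp)).smul_measure (by simp)

theorem charFun_limit (k : ℕ) (b a : Fin k → ℝ) (ha : ∀ i, 0 < a i)
    (ν : Measure ℝ) [IsProbabilityMeasure ν]
    (hν : ν = ∑ i, ENNReal.ofReal (a i) • Measure.dirac (b i)) (lam : ℝ)
    (hνi : ∀ i : ℕ, Integrable (fun x => x ^ i) ν)
    (ρ : ℕ → Measure ℝ) (hprob : ∀ n, IsProbabilityMeasure (ρ n))
    (hρ : ∀ n, ∀ i ≤ 2 * k + 2, Integrable (fun x => x ^ i) (ρ n))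
    (hlim : ∀ i, 1 ≤ i → i ≤ 2 * k + 2 → Tendsto (fun n : ℕ => (n : ℝ) * ∫ x, x ^ i ∂(ρ n)) atTop
      (𝓝 (lam * ∫ x, x ^ i ∂ν))) (t : ℝ) :
    Tendsto (fun n : ℕ => (n : ℂ) * (charFun (ρ n) t - 1)) atTop
      (𝓝 (lam * (charFun ν t - 1))) := by
  set f : ℂ → ℂ := fun z => Complex.exp (t * z * Complex.I) - 1 with hf
  have hnorm : ∀ x : ℝ, ‖Complex.exp (t * x * Complex.I)‖ ≤ 1 := fun x => by
    rw [← Complex.ofReal_mul, Complex.norm_exp_ofReal_mul_I]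
  have hint : ∀ (σ : Measure ℝ) [IsProbabilityMeasure σ],
      Integrable (fun x : ℝ => f x) σ ∧ ∫ x : ℝ, f x ∂σ = charFun σ t - 1 := by
    intro σ _
    have h : Integrable (fun x : ℝ => Complex.exp (t * x * Complex.I)) σ :=
      Integrable.of_bound (by fun_prop) 1 (ae_of_all _ hnorm)
    refine ⟨h.sub (integrable_const 1), ?_⟩
    simp only [hf]
    rw [integral_sub h (integrable_const 1), charFun_apply_real]
    simp
  obtain ⟨Q, D, hQd, hQ⟩ := double_interp k b f (by fun_prop)
    ⟨2, fun x => (norm_sub_le _ _).trans (by have := hnorm x; simp only [norm_one]; linarith)⟩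
  have hQ0 : Q.eval 0 = 0 := by
    have := hQ 0
    simpa [hf] using this
  have hQb : ∀ i, Q.eval (b i : ℂ) = f (b i) := by
    intro i
    have h := hQ (b i)
    rw [Finset.prod_eq_zero (Finset.mem_univ i) (sub_self _)] at h
    simp only [mul_zero, ne_eq, OfNat.ofNat_ne_zero, not_false_eq_true, zero_pow,
      norm_le_zero_iff] at h
    exact (sub_eq_zero.1 h).symm
  set P : Polynomial ℂ := (Polynomial.X * ∏ i, (Polynomial.X - Polynomial.C (b i : ℂ))) ^ 2 with hPdef
  have hPev : ∀ x : ℝ, P.eval (x : ℂ) = (((x * ∏ i, (x - b i)) ^ 2 : ℝ) : ℂ) := by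
    intro x
    simp [hPdef, Polynomial.eval_prod]
  have hPd : P.natDegree ≤ 2 * k + 2 := by
    refine Polynomial.natDegree_pow_le.trans ?_
    have h1 : (Polynomial.X * ∏ i, (Polynomial.X - Polynomial.C (b i : ℂ))).natDegree ≤ 1 + k := by
      refine Polynomial.natDegree_mul_le.trans ?_
      refine add_le_add Polynomial.natDegree_X_le ?_
      refine (Polynomial.natDegree_prod_le _ _).trans ?_
      simp
    omega
  have hP0 : P.eval 0 = 0 := by simp [hPdef]
  have hPlim := poly_limit _ ρ ν lam hρ hνi hlim P hPd hP0
  have hQlim := poly_limit _ ρ ν lam hρ hνi hlim Q hQd hQ0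
  have hPν : ∫ x : ℝ, P.eval (x : ℂ) ∂ν = 0 := by
    rw [hν, integral_atomic b a ha]
    refine Finset.sum_eq_zero fun i _ => ?_
    rw [hPev, Finset.prod_eq_zero (Finset.mem_univ i) (sub_self _)]
    simp
  have hQν : ∫ x : ℝ, Q.eval (x : ℂ) ∂ν = charFun ν t - 1 := by
    rw [← (hint ν).2, hν, integral_atomic b a ha, integral_atomic b a ha]
    exact Finset.sum_congr rfl fun i _ => by rw [hQb]
  rw [hPν, mul_zero] at hPlim
  rw [hQν] at hQlim
  have hdiff : Tendsto (fun n : ℕ => (n : ℂ) * (∫ x : ℝ, f x ∂(ρ n)) -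
      (n : ℂ) * ∫ x : ℝ, Q.eval (x : ℂ) ∂(ρ n)) atTop (𝓝 0) := by
    have hb := (hPlim.norm.const_mul D)
    rw [norm_zero, mul_zero] at hb
    refine squeeze_zero_norm (fun n => ?_) hb
    have hPint := (integrable_poly _ (ρ n) (hρ n) P hPd).1
    have hPint' : Integrable (fun x : ℝ => (x * ∏ i, (x - b i)) ^ 2) (ρ n) := by
      have := hPint.re
      simp only [hPev] at this
      exact this
    have hPI : ∫ x : ℝ, P.eval (x : ℂ) ∂(ρ n) =
        ((∫ x : ℝ, (x * ∏ i, (x - b i)) ^ 2 ∂(ρ n) : ℝ) : ℂ) := by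
      simp_rw [hPev]
      exact integral_ofReal
    have hp := hprob n
    rw [← mul_sub, ← integral_sub (hint (ρ n)).1 (integrable_poly _ (ρ n) (hρ n) Q hQd).1, hPI,
      norm_mul, norm_mul, Complex.norm_real, Real.norm_eq_abs,
      abs_of_nonneg (integral_nonneg fun x => sq_nonneg _), mul_left_comm]
    refine mul_le_mul_of_nonneg_left ?_ (norm_nonneg _)
    rw [← integral_const_mul]
    exact norm_integral_le_of_norm_le (hPint'.const_mul D) (ae_of_all _ hQ)
  have := hdiff.add hQlim
  rw [zero_add] at this
  refine this.congr fun n => ?_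
  have hp := hprob n
  rw [(hint (ρ n)).2]
  ring

theorem moment_convergence_to_compound_poisson
    (lam : ℝ) (hlam : 0 < lam)
    (k : ℕ) (hk : 1 ≤ k)
    (b : Fin k → ℝ) (hb : Function.Injective b) (hb0 : ∀ i, b i ≠ 0)
    (a : Fin k → ℝ) (ha : ∀ i, 0 < a i) (hsum : ∑ i, a i = 1)
    (ν : Measure ℝ)
    (hν : ν = ∑ i, ENNReal.ofReal (a i) • Measure.dirac (b i))
    (μs : ℕ → Measure ℝ)
    (hprobs : ∀ n, IsProbabilityMeasure (μs n))
    (hID : ∀ n, IsClassicallyInfDiv (μs n))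
    (hfin : ∀ n, ∀ i : ℕ, i ≤ 2 * k + 2 → Integrable (fun x => x ^ i) (μs n))
    (hmom : ∀ i : ℕ, 1 ≤ i → i ≤ 2 * k + 2 →
      Tendsto (fun n => ∫ x, x ^ i ∂(μs n)) atTop
        (𝓝 (∫ x, x ^ i ∂(compoundPoisson lam ν)))) :
    WeakConv μs (compoundPoisson lam ν) := by
  
  have hνp : IsProbabilityMeasure ν := by
    constructor
    rw [hν]
    simp only [Measure.coe_finsetSum, Finset.sum_apply, Measure.smul_apply, measure_univ,
      smul_eq_mul, mul_one]
    rw [← ENNReal.ofReal_sum_of_nonneg (fun i _ => (ha i).le), hsum, ENNReal.ofReal_one]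
  have hνi : ∀ i : ℕ, Integrable (fun x : ℝ => x ^ i) ν := by
    intro i
    rw [hν, integrable_finsetSum_measure]
    intro j _
    exact (integrable_dirac (by simp)).smul_measure (by simp)
  have hπ := compoundPoisson_prob lam hlam ν
  have hex : ∀ n, ∃ ρ : Measure ℝ, IsProbabilityMeasure ρ ∧ (1 ≤ n → μs n = convPow ρ n) ∧
      ∀ i ≤ 2 * k + 2, Integrable (fun x => x ^ i) ρ := by
    intro n
    rcases n with _ | n
    · exact ⟨Measure.dirac 0, inferInstance, by simp, fun i _ => integrable_dirac (by simp)⟩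
    · obtain ⟨ρ, h1, h2⟩ := hID (n + 1) (n + 1) (by omega)
      refine ⟨ρ, h1, fun _ => h2, fun i hi => ?_⟩
      have h3 := hfin (n + 1) i hi
      rw [h2, convPow] at h3
      have := convPow_prob ρ n
      exact integrable_of_classicalConv _ _ i h3
  choose ρ hρp hρ hρi using hex
  have hcum := cumulant_limit (2 * k + 2) (fun n => momSeries (ρ n))
    (fun n => by have := hρp n; simp [momSeries])
    (fun i => (∫ x, x ^ i ∂(compoundPoisson lam ν)) / (Nat.factorial i))
    (fun i => lam * ((∫ x, x ^ i ∂ν) / (Nat.factorial i)))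
    (by simp)
    (by
      intro i hi
      have h1 : Tendsto (fun n => (∫ x, x ^ i ∂(μs n)) / (Nat.factorial i : ℝ)) atTop
          (𝓝 ((∫ x, x ^ i ∂(compoundPoisson lam ν)) / (Nat.factorial i))) := by
        refine Tendsto.div_const ?_ _
        rcases Nat.eq_zero_or_pos i with rfl | h
        · simp
        · exact hmom i h hi
      refine h1.congr' ?_
      filter_upwards [eventually_ge_atTop 1] with n hn
      have := hρp n
      rw [← (convPow_moment (ρ n) (2 * k + 2) (hρi n) n i hi).2, ← hρ n hn])
    (fun i => compoundPoisson_moment lam hlam ν hνi i)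
  have hlim : ∀ i, 1 ≤ i → i ≤ 2 * k + 2 →
      Tendsto (fun n : ℕ => (n : ℝ) * ∫ x, x ^ i ∂(ρ n)) atTop (𝓝 (lam * ∫ x, x ^ i ∂ν)) := by
    intro i h1 h2
    have h := (hcum i h1 h2).mul_const (Nat.factorial i : ℝ)
    have hne : (Nat.factorial i : ℝ) ≠ 0 := by exact_mod_cast Nat.factorial_ne_zero i
    rw [mul_assoc, div_mul_cancel₀ _ hne] at h
    refine h.congr fun n => ?_
    rw [momSeries, PowerSeries.coeff_mk, mul_assoc, div_mul_cancel₀ _ hne]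
  have hchar : ∀ t : ℝ, Tendsto (fun n => charFun (μs n) t) atTop
      (𝓝 (charFun (compoundPoisson lam ν) t)) := by
    intro t
    have h := Complex.tendsto_one_add_pow_exp_of_tendsto
      (charFun_limit k b a ha ν hν lam hνi ρ hρp hρi hlim t)
    rw [compoundPoisson_charFun lam hlam ν t]
    refine h.congr' ?_
    filter_upwards [eventually_ge_atTop 1] with n hn
    have := hρp n
    rw [hρ n hn, charFun_convPow, add_sub_cancel]
  have hweak := ProbabilityMeasure.tendsto_of_tendsto_charFun
    (μ := fun n => (⟨μs n, hprobs n⟩ : ProbabilityMeasure ℝ))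
    (μ₀ := (⟨compoundPoisson lam ν, hπ⟩ : ProbabilityMeasure ℝ)) hchar
  exact fun f => (ProbabilityMeasure.tendsto_iff_forall_integral_tendsto.1 hweak) f
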